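/- Let p be a rational prime, let α ∈ ℚ_p be a p-adic algebraic number of degree d ≥ 3 over ℚ, and let β ∈ ℚ(α) be irrational. Let μ be a real number with d/2 + 1 < μ < d and let C₀ > 0. Then there exist positive real numbers C₃ and C₄ (depending only on α, β, μ and C₀) with the following property: if x₁/y₁ and x₂/y₂ are rational numbers in lowest terms with H(x₂,y₂) ≥ H(x₁,y₁) ≥ C₃, |y₁α − x₁|_p < C₀/H(x₁,y₁)^μ and |y₂β − x₂|_p < C₀/H(x₂,y₂)^μ, then either H(x₂,y₂) > C₄⁻¹ · H(x₁,y₁)^{μ − d/2}, or there exist integers s, t, u, v with sv − tu ≠ 0 such that β = (sα + t)/(uα + v) and x₂/y₂ = (s x₁ + t y₁)/(u x₁ + v y₁). -/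

import Mathlib

/-!
Among all pairs `(P, Q) ≠ (0, 0)` of rational polynomials with `P(α) = β Q(α)`, take one for which
`k = max (deg P, deg Q)` is minimal, and clear denominators. Counting dimensions gives `2k ≤ d`.
Minimality makes `P` and `Q` coprime and, since `(P', Q')` has smaller degree, forces
`P'(α) ≠ β Q'(α)` (`exists_minimal_pair`).

Let `a`, `b` be the values at `(x₁, y₁)` of the degree `k` homogenizations of `P`, `Q`, and let
`N = a y₂ - b x₂`. Then `|N| ≪ H₁ ^ k H₂`, while `P(α) = β Q(α)` gives `|N|_p ≪ H₁ ^ (-μ)`.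
If `N ≠ 0`, then `1 ≤ |N| |N|_p` yields `H₂ ≫ H₁ ^ (μ - k) ≥ H₁ ^ (μ - d / 2)`.

If `N = 0`, then `x₂ / y₂ = a / b`. For `k = 1` this is the fractional linear relation. The case
`k ≥ 2` is impossible once `H₁` is large:
* a homogeneous Bézout identity bounds `gcd (a, b)`, so that `H₂ ≫ H₁ ^ k ≥ H₁ ^ 2`
  (`exists_le_ratHeight_of_cross_eq`);
* `P - β Q` has a simple zero at `α`, so that `|y₁ α - x₁|_p ≪ |a - β b|_p ≤ |y₂ β - x₂|_p`
  (`exists_norm_le_transfer`);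
* Liouville's inequality `|y₁ α - x₁|_p ≫ H₁ ^ (-d)` (`liouville`) then gives
  `H₁ ^ (-d) ≪ H₂ ^ (-μ) ≪ H₁ ^ (-2μ)`, contrary to `2μ > d + 2`.
-/

/-- The height `H(x, y) = max (|x|, |y|)` of a rational number `x/y` in lowest terms,
as a real number. -/
noncomputable def ratHeight (x y : ℤ) : ℝ := max |(x : ℝ)| |(y : ℝ)|

open Polynomial

/-! ### Homogenized values and heights -/

/-- The value at `(x, y)` of the degree `k` homogenization of `P`. Coefficients of `P` beyond
degree `k` are dropped, so this is meaningful for `P.natDegree ≤ k`. -/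
def homEval (P : ℤ[X]) (k : ℕ) (x y : ℤ) : ℤ :=
  ∑ i ∈ Finset.range (k + 1), P.coeff i * x ^ i * y ^ (k - i)

lemma homEval_cast {K : Type*} [Field K] {P : ℤ[X]} {k : ℕ} (hP : P.natDegree ≤ k)
    (x y : ℤ) (hy : (y : K) ≠ 0) :
    (homEval P k x y : K) = (y : K) ^ k * aeval ((x : K) / (y : K)) P := by
  rw [aeval_eq_sum_range' (Nat.lt_succ_of_le hP), homEval, Finset.mul_sum]
  push_cast
  refine Finset.sum_congr rfl fun i hi => ?_
  have hik : i ≤ k := by simpa [Nat.lt_succ_iff] using hi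
  obtain ⟨j, rfl⟩ := Nat.exists_eq_add_of_le hik
  rw [Nat.add_sub_cancel_left, zsmul_eq_mul, div_pow, pow_add]
  field_simp

lemma abs_le_ratHeight_left (x y : ℤ) : |(x : ℝ)| ≤ ratHeight x y := le_max_left _ _

lemma abs_le_ratHeight_right (x y : ℤ) : |(y : ℝ)| ≤ ratHeight x y := le_max_right _ _

lemma one_le_ratHeight {x y : ℤ} (hy : 0 < y) : 1 ≤ ratHeight x y := by
  refine le_trans ?_ (abs_le_ratHeight_right x y)
  have : (1 : ℝ) ≤ y := by exact_mod_cast hy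
  exact this.trans (le_abs_self _)

lemma exists_homEval_le (P : ℤ[X]) (k : ℕ) :
    ∃ C : ℝ, 0 < C ∧ ∀ x y : ℤ, |(homEval P k x y : ℝ)| ≤ C * ratHeight x y ^ k := by
  refine ⟨∑ i ∈ Finset.range (k + 1), |(P.coeff i : ℝ)| + 1, by positivity, fun x y => ?_⟩
  have hH : 0 ≤ ratHeight x y := (abs_nonneg _).trans (abs_le_ratHeight_left x y)
  have h1 : |(homEval P k x y : ℝ)| ≤
      ∑ i ∈ Finset.range (k + 1), |(P.coeff i : ℝ)| * ratHeight x y ^ k := by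
    rw [homEval]
    push_cast
    refine (Finset.abs_sum_le_sum_abs _ _).trans (Finset.sum_le_sum fun i hi => ?_)
    have hik : i ≤ k := by simpa [Nat.lt_succ_iff] using hi
    obtain ⟨j, rfl⟩ := Nat.exists_eq_add_of_le hik
    rw [Nat.add_sub_cancel_left, abs_mul, abs_mul, abs_pow, abs_pow, mul_assoc, pow_add]
    gcongr
    · exact abs_le_ratHeight_left x y
    · exact abs_le_ratHeight_right x y
  rw [← Finset.sum_mul] at h1
  have := pow_nonneg hH k
  linarith

/-! ### Estimates in the `p`-adic numbers -/

section padic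

variable {p : ℕ} [Fact p.Prime]

/-- One place of the product formula: `|n|_p` is the inverse of the power of `p` dividing `n`. -/
lemma one_le_abs_mul_norm {n : ℤ} (hn : n ≠ 0) : 1 ≤ |(n : ℝ)| * ‖(n : ℚ_[p])‖ := by
  have hn' : (n : ℚ_[p]) ≠ 0 := by exact_mod_cast hn
  have hp : (0 : ℝ) < p := by exact_mod_cast (Fact.out : p.Prime).pos
  rw [Padic.norm_eq_zpow_neg_valuation hn', Padic.valuation_intCast, zpow_neg, zpow_natCast,
    ← div_eq_mul_inv, one_le_div (by positivity)]
  have h := Int.le_of_dvd (abs_pos.2 hn) ((dvd_abs _ _).2 (padicValInt_dvd (p := p) n))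
  exact_mod_cast h

lemma norm_pow_sub_pow_le (α : ℚ_[p]) (x y : ℤ) (i : ℕ) :
    ‖(x : ℚ_[p]) ^ i - (y * α) ^ i‖ ≤ max 1 ‖α‖ ^ i * ‖(y : ℚ_[p]) * α - x‖ := by
  have hA : 1 ≤ max 1 ‖α‖ := le_max_left _ _
  have hyα : ‖(y : ℚ_[p]) * α‖ ≤ max 1 ‖α‖ := by
    rw [norm_mul]
    exact (mul_le_of_le_one_left (norm_nonneg _) (Padic.norm_int_le_one y)).trans (le_max_right _ _)
  induction i with
  | zero => simp
  | succ i ih =>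
    have e : (x : ℚ_[p]) ^ (i + 1) - (y * α) ^ (i + 1)
        = x * (x ^ i - (y * α) ^ i) + (x - y * α) * (y * α) ^ i := by ring
    rw [e]
    refine (Padic.nonarchimedean _ _).trans (max_le ?_ ?_)
    · rw [norm_mul]
      calc _ ≤ 1 * (max 1 ‖α‖ ^ i * ‖(y : ℚ_[p]) * α - x‖) := by
            gcongr
            exact Padic.norm_int_le_one x
        _ ≤ _ := by
            rw [one_mul]
            gcongr
            omega
    · rw [norm_mul, norm_pow, norm_sub_rev, mul_comm]
      gcongr
      calc _ ≤ max 1 ‖α‖ ^ i := by gcongr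
        _ ≤ _ := by
            gcongr
            omega

/-- The homogenization of `P`, which takes the value `y ^ k * P(α)` at `(y * α, y)`, is Lipschitz
in its first argument. -/
lemma exists_norm_homEval_sub_le (α : ℚ_[p]) {P : ℤ[X]} {k : ℕ} (hP : P.natDegree ≤ k) :
    ∃ c : ℝ, 0 < c ∧ ∀ x y : ℤ,
      ‖(homEval P k x y : ℚ_[p]) - (y : ℚ_[p]) ^ k * aeval α P‖ ≤ c * ‖(y : ℚ_[p]) * α - x‖ := by
  refine ⟨∑ i ∈ Finset.range (k + 1), max 1 ‖α‖ ^ i, by positivity, fun x y => ?_⟩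
  rw [aeval_eq_sum_range' (Nat.lt_succ_of_le hP), homEval, Finset.mul_sum]
  push_cast
  rw [← Finset.sum_sub_distrib, Finset.sum_mul]
  refine norm_sum_le_of_le _ fun i hi => ?_
  have hik : i ≤ k := by simpa [Nat.lt_succ_iff] using hi
  obtain ⟨j, rfl⟩ := Nat.exists_eq_add_of_le hik
  have e : (P.coeff i : ℚ_[p]) * x ^ i * y ^ (i + j - i) - y ^ (i + j) * P.coeff i • α ^ i
      = ((P.coeff i * y ^ j : ℤ) : ℚ_[p]) * (x ^ i - (y * α) ^ i) := by
    rw [Nat.add_sub_cancel_left, zsmul_eq_mul]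
    push_cast
    ring
  rw [e, norm_mul]
  exact (mul_le_of_le_one_left (norm_nonneg _) (Padic.norm_int_le_one _)).trans
    (norm_pow_sub_pow_le α x y i)

/-- In a good approximation `x / y` of `α` in lowest terms, `y` cannot be `p`-adically small: `p`
would divide `x` as well. -/
lemma norm_denominator_ge {α : ℚ_[p]} {x y : ℤ} (hxy : IsCoprime x y)
    (h : ‖(y : ℚ_[p]) * α - x‖ < 1) : (max 1 ‖α‖)⁻¹ ≤ ‖(y : ℚ_[p])‖ := by
  by_contra! hlt
  have hA : 1 ≤ max 1 ‖α‖ := le_max_left _ _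
  have hy : ‖(y : ℚ_[p])‖ < 1 := hlt.trans_le (inv_le_one_of_one_le₀ hA)
  have hyα : ‖(y : ℚ_[p]) * α‖ < 1 := by
    rw [norm_mul]
    calc _ ≤ ‖(y : ℚ_[p])‖ * max 1 ‖α‖ := by gcongr; exact le_max_right _ _
      _ < (max 1 ‖α‖)⁻¹ * max 1 ‖α‖ := by gcongr
      _ = 1 := inv_mul_cancel₀ (by positivity)
  have hx : ‖(x : ℚ_[p])‖ < 1 := by
    have e : (x : ℚ_[p]) = y * α + -(y * α - x) := by ring
    rw [e]
    refine (Padic.nonarchimedean _ _).trans_lt (max_lt hyα ?_)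
    rwa [norm_neg]
  rw [Padic.norm_intCast_lt_one_iff] at hx hy
  have := hxy.isUnit_of_dvd' hx hy
  exact (Nat.prime_iff_prime_int.1 (Fact.out : p.Prime)).not_isUnit this

/-- Liouville's inequality: the homogenized integral minimal polynomial of `α` takes a nonzero
integer value at `(x, y)`, which is `p`-adically at most a constant times `|y α - x|_p`. -/
lemma liouville {α : ℚ_[p]} (hα : IsAlgebraic ℚ α) {d : ℕ} (hd : 2 ≤ d)
    (hdeg : (minpoly ℚ α).natDegree = d) :
    ∃ c : ℝ, 0 < c ∧ ∀ x y : ℤ, 0 < y →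
      1 ≤ c * ratHeight x y ^ d * ‖(y : ℚ_[p]) * α - x‖ := by
  obtain ⟨b, hb, hF⟩ := IsLocalization.integerNormalization_spec (nonZeroDivisors ℤ) (minpoly ℚ α)
  set F := IsLocalization.integerNormalization (nonZeroDivisors ℤ) (minpoly ℚ α) with hFdef
  have hb0 : b ≠ 0 := nonZeroDivisors.ne_zero hb
  have hFdeg : F.natDegree = d := by
    rw [← natDegree_map_eq_of_injective (f := algebraMap ℤ ℚ) (algebraMap ℤ ℚ).injective_int, hF,
      natDegree_smul _ hb0, hdeg]
  have hFα : aeval α F = 0 :=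
    IsLocalization.integerNormalization_aeval_eq_zero _ _ (minpoly.aeval ℚ α)
  obtain ⟨C, hC, hC'⟩ := exists_homEval_le F d
  obtain ⟨c, hc, hc'⟩ := exists_norm_homEval_sub_le α hFdeg.le
  refine ⟨C * c, by positivity, fun x y hy => ?_⟩
  have hyQ : (y : ℚ) ≠ 0 := Int.cast_ne_zero.2 (ne_of_gt hy)
  -- The minimal polynomial, irreducible of degree at least two, has no rational root.
  have hne : homEval F d x y ≠ 0 := by
    intro h0
    have h := homEval_cast (K := ℚ) hFdeg.le x y hyQ
    rw [h0, Int.cast_zero, eq_comm, mul_eq_zero, or_iff_right (pow_ne_zero _ hyQ),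
      ← aeval_map_algebraMap ℚ, hF, map_zsmul, smul_eq_zero, or_iff_right hb0] at h
    have hr : (minpoly ℚ α).IsRoot ((x : ℚ) / y) := by simpa [IsRoot, coe_aeval_eq_eval] using h
    have := degree_eq_one_of_irreducible_of_root (minpoly.irreducible hα.isIntegral) hr
    have h1 := (degree_eq_iff_natDegree_eq_of_pos one_pos).1 this
    omega
  have h1 := one_le_abs_mul_norm (p := p) hne
  have h2 := hc' x y
  rw [hFα, mul_zero, sub_zero] at h2
  calc (1 : ℝ) ≤ _ := h1
    _ ≤ (C * ratHeight x y ^ d) * (c * ‖(y : ℚ_[p]) * α - x‖) := by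
        exact mul_le_mul (hC' x y) h2 (norm_nonneg _) ((abs_nonneg _).trans (hC' x y))
    _ = _ := by ring

end padic

/-! ### The minimal relation between `α` and `β` -/

lemma exists_int_multiple (U : ℚ[X]) :
    ∃ r : ℤ, r ≠ 0 ∧ ∃ U' : ℤ[X], U'.map (algebraMap ℤ ℚ) = C (r : ℚ) * U := by
  obtain ⟨b, hb, hF⟩ := IsLocalization.integerNormalization_spec (nonZeroDivisors ℤ) U
  refine ⟨b, nonZeroDivisors.ne_zero hb, _, hF.trans ?_⟩
  rw [zsmul_eq_mul]
  simp

lemma natDegree_of_map_eq {r : ℤ} (hr : r ≠ 0) {U : ℚ[X]} {U' : ℤ[X]}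
    (h : U'.map (algebraMap ℤ ℚ) = C (r : ℚ) * U) : U'.natDegree = U.natDegree := by
  rw [← natDegree_map_eq_of_injective (f := algebraMap ℤ ℚ) (algebraMap ℤ ℚ).injective_int, h,
    natDegree_C_mul (by exact_mod_cast hr)]

lemma aeval_of_map_eq {K : Type*} [Field K] [CharZero K] {r : ℤ} {U : ℚ[X]} {U' : ℤ[X]}
    (h : U'.map (algebraMap ℤ ℚ) = C (r : ℚ) * U) (z : K) :
    aeval z U' = (r : K) * aeval z U := by
  rw [← aeval_map_algebraMap ℚ, h, map_mul, aeval_C]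
  simp

/-- Bézout's identity with a degree bound. The bound `k` on both cofactors lets the identity be
homogenized in degree `2 * k`. -/
lemma bezout_rat {P Q : ℚ[X]} (h : IsCoprime P Q) {k : ℕ} (hP0 : P ≠ 0) (hP : P.natDegree = k)
    (hQ : Q.natDegree ≤ k) {T : ℚ[X]} (hT : T.natDegree ≤ 2 * k) :
    ∃ U V : ℚ[X], U.natDegree ≤ k ∧ V.natDegree ≤ k ∧ U * P + V * Q = T := by
  obtain ⟨u, v, huv⟩ := h
  have hdm := EuclideanDomain.div_add_mod (v * T) P
  set V := (v * T) % P with hV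
  set q := (v * T) / P
  have hVdeg : V.natDegree ≤ k := by
    have := Polynomial.degree_mod_lt (v * T) hP0
    exact hP ▸ natDegree_le_natDegree this.le
  have e : (u * T + q * Q) * P + V * Q = T := by
    linear_combination T * huv + Q * hdm
  refine ⟨u * T + q * Q, V, ?_, hVdeg, e⟩
  set U := u * T + q * Q
  have h1 : (U * P).natDegree ≤ 2 * k := by
    rw [eq_sub_of_add_eq e]
    refine (natDegree_sub_le _ _).trans (max_le hT (natDegree_mul_le.trans (by omega)))
  by_cases hU : U = 0
  · simp [hU]
  rw [natDegree_mul hU hP0] at h1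
  omega

lemma bezout_int {P Q : ℤ[X]} (h : IsCoprime (P.map (algebraMap ℤ ℚ)) (Q.map (algebraMap ℤ ℚ)))
    {k : ℕ} (hk : 1 ≤ k) (hP : P.natDegree ≤ k) (hQ : Q.natDegree ≤ k)
    (hPQ : P.natDegree = k ∨ Q.natDegree = k) {T : ℤ[X]} (hT : T.natDegree ≤ 2 * k) :
    ∃ (r : ℤ) (U V : ℤ[X]), r ≠ 0 ∧ U.natDegree ≤ k ∧ V.natDegree ≤ k ∧
      U * P + V * Q = C r * T := by
  have hinj : Function.Injective (algebraMap ℤ ℚ) := (algebraMap ℤ ℚ).injective_int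
  have hdeg : ∀ F : ℤ[X], (F.map (algebraMap ℤ ℚ)).natDegree = F.natDegree :=
    fun F => natDegree_map_eq_of_injective hinj F
  have key : ∃ U V : ℚ[X], U.natDegree ≤ k ∧ V.natDegree ≤ k ∧
      U * P.map (algebraMap ℤ ℚ) + V * Q.map (algebraMap ℤ ℚ) = T.map (algebraMap ℤ ℚ) := by
    have hne : ∀ F : ℤ[X], F.natDegree = k → F.map (algebraMap ℤ ℚ) ≠ 0 := by
      intro F hF h0
      have := hdeg F
      rw [h0, natDegree_zero] at this
      omega
    rcases hPQ with h' | h'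
    · exact bezout_rat h (hne P h') ((hdeg P).trans h') ((hdeg Q).trans_le hQ)
        ((hdeg T).trans_le hT)
    · obtain ⟨U, V, hU, hV, e⟩ := bezout_rat h.symm (hne Q h') ((hdeg Q).trans h')
        ((hdeg P).trans_le hP) ((hdeg T).trans_le hT)
      exact ⟨V, U, hV, hU, by rw [← e, add_comm]⟩
  obtain ⟨U, V, hU, hV, e⟩ := key
  obtain ⟨r, hr, U', hU'⟩ := exists_int_multiple U
  obtain ⟨s, hs, V', hV'⟩ := exists_int_multiple V
  refine ⟨r * s, C s * U', C r * V', mul_ne_zero hr hs, ?_, ?_, ?_⟩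
  · exact (natDegree_C_mul_le _ _).trans ((natDegree_of_map_eq hr hU').trans_le hU)
  · exact (natDegree_C_mul_le _ _).trans ((natDegree_of_map_eq hs hV').trans_le hV)
  · apply map_injective _ hinj
    have hC : ∀ n : ℤ, (C n).map (algebraMap ℤ ℚ) = C (n : ℚ) := fun n => by rw [map_C]; rfl
    rw [Polynomial.map_add, Polynomial.map_mul, Polynomial.map_mul, Polynomial.map_mul,
      Polynomial.map_mul, Polynomial.map_mul, hU', hV', ← e, hC, hC, hC, Int.cast_mul, C_mul]
    ring

/-- The pairs of polynomials of degree at most `⌊d / 2⌋` form a space of dimension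
`2 * (⌊d / 2⌋ + 1) > d = [ℚ(α) : ℚ]`. -/
lemma exists_relation {L : Type*} [Field L] [Algebra ℚ L] {α β : L} (hα : IsAlgebraic ℚ α)
    (hβ : β ∈ Algebra.adjoin ℚ {α}) :
    ∃ P Q : ℚ[X], (P ≠ 0 ∨ Q ≠ 0) ∧ P.natDegree ≤ (minpoly ℚ α).natDegree / 2 ∧
      Q.natDegree ≤ (minpoly ℚ α).natDegree / 2 ∧ aeval α P = β * aeval α Q := by
  set m := (minpoly ℚ α).natDegree / 2 with hm
  let pb := Algebra.adjoin.powerBasis hα.isIntegral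
  have : Module.Finite ℚ (Algebra.adjoin ℚ {α}) := pb.finite
  let a : Algebra.adjoin ℚ {α} := ⟨α, Algebra.subset_adjoin rfl⟩
  let b : Algebra.adjoin ℚ {α} := ⟨β, hβ⟩
  let g : ℚ[X] × ℚ[X] →ₗ[ℚ] Algebra.adjoin ℚ {α} :=
    (aeval a).toLinearMap.coprod (-(LinearMap.mulLeft ℚ b ∘ₗ (aeval a).toLinearMap))
  let e := (degreeLTEquiv ℚ (m + 1)).symm
  let i : (Fin (m + 1) → ℚ) →ₗ[ℚ] ℚ[X] := (degreeLT ℚ (m + 1)).subtype ∘ₗ e.toLinearMap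
  have hi : Function.Injective i := by
    intro u v h
    exact e.injective (Subtype.ext h)
  have hideg : ∀ u, (i u).natDegree ≤ m := by
    intro u
    have h : i u ∈ degreeLT ℚ (m + 1) := (e u).2
    rw [degreeLT_succ_eq_degreeLE, mem_degreeLE] at h
    exact natDegree_le_of_degree_le h
  have hker : LinearMap.ker (g ∘ₗ i.prodMap i) ≠ ⊥ := by
    apply LinearMap.ker_ne_bot_of_finrank_lt
    rw [pb.finrank, Algebra.adjoin.powerBasis_dim, Module.finrank_prod, Module.finrank_fin_fun]
    omega
  obtain ⟨⟨u, v⟩, huv, hne⟩ := (Submodule.ne_bot_iff _).1 hker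
  refine ⟨i u, i v, ?_, hideg u, hideg v, ?_⟩
  · by_contra! h
    apply hne
    rw [Prod.mk_eq_zero]
    exact ⟨hi (by simp [h.1]), hi (by simp [h.2])⟩
  · have h : aeval a (i u) + -(b * aeval a (i v)) = 0 := by simpa [g] using huv
    have hval := congrArg (Subalgebra.val _) h
    simp only [map_add, map_neg, map_mul, ← aeval_algHom_apply, map_zero] at hval
    exact eq_of_sub_eq_zero (by rw [sub_eq_add_neg]; exact hval)

/-- A pair `(P, Q)` with `β = P(α) / Q(α)` and `max (deg P, deg Q)` minimal, scaled to integer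
coefficients. Coprimality and the nonvanishing of `P'(α) - β Q'(α)` both come from minimality. -/
lemma exists_minimal_pair {L : Type*} [Field L] [CharZero L] {α β : L} (hα : IsAlgebraic ℚ α)
    (hβ : β ∈ Algebra.adjoin ℚ {α}) (hβirr : ∀ q : ℚ, (q : L) ≠ β) :
    ∃ (k : ℕ) (P Q : ℤ[X]), 1 ≤ k ∧ 2 * k ≤ (minpoly ℚ α).natDegree ∧ P.natDegree ≤ k ∧
      Q.natDegree ≤ k ∧ (P.natDegree = k ∨ Q.natDegree = k) ∧
      IsCoprime (P.map (algebraMap ℤ ℚ)) (Q.map (algebraMap ℤ ℚ)) ∧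
      aeval α Q ≠ 0 ∧ aeval α P = β * aeval α Q ∧
      aeval α (derivative P) - β * aeval α (derivative Q) ≠ 0 := by
  classical
  set d := (minpoly ℚ α).natDegree with hd
  have hdpos : 0 < d := minpoly.natDegree_pos hα.isIntegral
  have hex : ∃ k : ℕ, ∃ P Q : ℚ[X], (P ≠ 0 ∨ Q ≠ 0) ∧ P.natDegree ≤ k ∧ Q.natDegree ≤ k ∧
      aeval α P = β * aeval α Q := by
    obtain ⟨P, Q, h⟩ := exists_relation hα hβ
    exact ⟨_, P, Q, h⟩
  have hkd : Nat.find hex ≤ d / 2 := Nat.find_min' hex (exists_relation hα hβ)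
  have hmin : ∀ (P Q : ℚ[X]) (j : ℕ), (P ≠ 0 ∨ Q ≠ 0) → P.natDegree ≤ j → Q.natDegree ≤ j →
      aeval α P = β * aeval α Q → Nat.find hex ≤ j :=
    fun P Q j h0 h1 h2 h3 => Nat.find_min' hex ⟨P, Q, h0, h1, h2, h3⟩
  obtain ⟨P, Q, h0, hP, hQ, hrel⟩ := Nat.find_spec hex
  set k := Nat.find hex
  have hnz : ∀ F : ℚ[X], F ≠ 0 → F.natDegree ≤ k → aeval α F ≠ 0 := by
    intro F hF hdF h
    have := natDegree_le_of_dvd (minpoly.dvd ℚ α h) hF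
    omega
  have hQ0 : Q ≠ 0 := by
    rintro rfl
    rw [map_zero, mul_zero] at hrel
    exact hnz P (by simpa using h0) hP hrel
  have hQα := hnz Q hQ0 hQ
  have hk : 1 ≤ k := by
    by_contra! hlt
    have hk0 : k = 0 := by omega
    rw [hk0] at hP hQ
    rw [eq_C_of_natDegree_le_zero hP, eq_C_of_natDegree_le_zero hQ, aeval_C, aeval_C] at hrel
    rw [eq_C_of_natDegree_le_zero hQ, aeval_C] at hQα
    apply hβirr (P.coeff 0 / Q.coeff 0)
    rw [Rat.cast_div, div_eq_iff (by simpa using hQα)]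
    simpa using hrel
  have hmax : P.natDegree = k ∨ Q.natDegree = k := by
    have := hmin P Q (max P.natDegree Q.natDegree) h0 (le_max_left _ _) (le_max_right _ _) hrel
    rcases le_max_iff.1 this with h | h
    · exact Or.inl (hP.antisymm h)
    · exact Or.inr (hQ.antisymm h)
  have hcop : IsCoprime P Q := by
    rw [← EuclideanDomain.gcd_isUnit_iff]
    obtain ⟨P', hP'⟩ := EuclideanDomain.gcd_dvd_left P Q
    obtain ⟨Q', hQ'⟩ := EuclideanDomain.gcd_dvd_right P Q
    set G := EuclideanDomain.gcd P Q
    have hG0 : G ≠ 0 := by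
      rintro h
      rw [h, zero_mul] at hQ'
      exact hQ0 hQ'
    have hQ'0 : Q' ≠ 0 := by
      rintro h
      rw [h, mul_zero] at hQ'
      exact hQ0 hQ'
    have hGdeg : G.natDegree + Q'.natDegree ≤ k := by
      rw [← natDegree_mul hG0 hQ'0, ← hQ']
      exact hQ
    have hGα := hnz G hG0 (by omega)
    have hP'deg : P'.natDegree ≤ k - G.natDegree := by
      by_cases hz : P' = 0
      · simp [hz]
      · have : G.natDegree + P'.natDegree ≤ k := by
          rw [← natDegree_mul hG0 hz, ← hP']
          exact hP
        omega
    have hrel' : aeval α P' = β * aeval α Q' := by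
      rw [hP', hQ', map_mul, map_mul] at hrel
      apply mul_left_cancel₀ hGα
      linear_combination hrel
    have := hmin P' Q' _ (Or.inr hQ'0) hP'deg (by omega) hrel'
    exact isUnit_iff_degree_eq_zero.2 (by
      rw [degree_eq_natDegree hG0]
      have : G.natDegree = 0 := by omega
      simp [this])
  have hder : aeval α (derivative P) - β * aeval α (derivative Q) ≠ 0 := by
    intro h
    have hP1 := natDegree_derivative_le P
    have hQ1 := natDegree_derivative_le Q
    by_cases hz : derivative P ≠ 0 ∨ derivative Q ≠ 0
    · have := hmin _ _ (k - 1) hz (by omega) (by omega) (sub_eq_zero.1 h)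
      omega
    · push Not at hz
      have h1 := derivative_eq_zero.1 hz.1
      have h2 := derivative_eq_zero.1 hz.2
      omega
  obtain ⟨r, hr, P₁, hP₁⟩ := exists_int_multiple P
  obtain ⟨s, hs, Q₁, hQ₁⟩ := exists_int_multiple Q
  have hC : ∀ n : ℤ, (C n).map (algebraMap ℤ ℚ) = C (n : ℚ) := fun n => by rw [map_C]; rfl
  have hP₂ : (C s * P₁).map (algebraMap ℤ ℚ) = C ((r * s : ℤ) : ℚ) * P := by
    rw [Polynomial.map_mul, hC, hP₁, Int.cast_mul, C_mul]
    ring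
  have hQ₂ : (C r * Q₁).map (algebraMap ℤ ℚ) = C ((r * s : ℤ) : ℚ) * Q := by
    rw [Polynomial.map_mul, hC, hQ₁, Int.cast_mul, C_mul]
    ring
  have hrs : r * s ≠ 0 := mul_ne_zero hr hs
  have hrsL : ((r * s : ℤ) : L) ≠ 0 := by exact_mod_cast hrs
  have hder_map : ∀ {F : ℤ[X]} {E : ℚ[X]} {n : ℤ}, F.map (algebraMap ℤ ℚ) = C (n : ℚ) * E →
      (derivative F).map (algebraMap ℤ ℚ) = C (n : ℚ) * derivative E := by
    intro F E n h
    rw [← derivative_map, h, derivative_C_mul]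
  refine ⟨k, C s * P₁, C r * Q₁, hk, by omega, ?_, ?_, ?_, ?_, ?_, ?_, ?_⟩
  · rwa [natDegree_of_map_eq hrs hP₂]
  · rwa [natDegree_of_map_eq hrs hQ₂]
  · rwa [natDegree_of_map_eq hrs hP₂, natDegree_of_map_eq hrs hQ₂]
  · rw [hP₂, hQ₂]
    exact (isCoprime_mul_unit_left (isUnit_C.2 (IsUnit.mk0 _ (by exact_mod_cast hrs))) _ _).2 hcop
  · rw [aeval_of_map_eq hQ₂]
    exact mul_ne_zero hrsL hQα
  · rw [aeval_of_map_eq hQ₂, aeval_of_map_eq hP₂, hrel]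
    ring
  · rw [aeval_of_map_eq (hder_map hQ₂), aeval_of_map_eq (hder_map hP₂)]
    intro h
    apply mul_ne_zero hrsL hder
    rw [← h]
    ring

/-! ### The case of a vanishing form -/

/-- If `P` and `Q` are coprime and `x₂ / y₂ = P(x₁ / y₁) / Q(x₁ / y₁)`, then the height of
`x₂ / y₂` is at least a constant times the `k`-th power of that of `x₁ / y₁`. The two Bézout
identities, with right-hand sides `r y₁ ^ (2k)` and `r' x₁ ^ (2k)`, bound the cancellation in the
fraction by `r r'` and its numerator and denominator from below. -/
lemma exists_le_ratHeight_of_cross_eq {P Q : ℤ[X]}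
    (h : IsCoprime (P.map (algebraMap ℤ ℚ)) (Q.map (algebraMap ℤ ℚ)))
    {k : ℕ} (hk : 1 ≤ k) (hP : P.natDegree ≤ k) (hQ : Q.natDegree ≤ k)
    (hPQ : P.natDegree = k ∨ Q.natDegree = k) :
    ∃ c : ℝ, 0 < c ∧ ∀ x₁ y₁ x₂ y₂ : ℤ, 0 < y₁ → IsCoprime x₁ y₁ → IsCoprime x₂ y₂ →
      homEval P k x₁ y₁ * y₂ = homEval Q k x₁ y₁ * x₂ →
      c * ratHeight x₁ y₁ ^ k ≤ ratHeight x₂ y₂ := by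
  obtain ⟨r, U, V, hr, hU, hV, e⟩ := bezout_int h hk hP hQ hPQ (T := 1) (by simp)
  obtain ⟨r', U', V', hr', hU', hV', e'⟩ := bezout_int h hk hP hQ hPQ (T := X ^ (2 * k)) (by simp)
  obtain ⟨C₁, hC₁, hC₁'⟩ := exists_homEval_le U k
  obtain ⟨C₂, hC₂, hC₂'⟩ := exists_homEval_le V k
  obtain ⟨C₃, hC₃, hC₃'⟩ := exists_homEval_le U' k
  obtain ⟨C₄, hC₄, hC₄'⟩ := exists_homEval_le V' k
  have hrr : 0 < |((r * r' : ℤ) : ℝ)| := by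
    rw [abs_pos]
    exact_mod_cast mul_ne_zero hr hr'
  refine ⟨((C₁ + C₂ + C₃ + C₄) * |((r * r' : ℤ) : ℝ)|)⁻¹, by positivity, ?_⟩
  intro x₁ y₁ x₂ y₂ hy₁ hxy₁ hxy₂ hcross
  have hyQ : (y₁ : ℚ) ≠ 0 := by exact_mod_cast hy₁.ne'
  have hhom : ∀ {A B E : ℤ[X]} {n : ℤ}, A.natDegree ≤ k → B.natDegree ≤ k →
      A * P + B * Q = C n * E →
      ((homEval A k x₁ y₁ * homEval P k x₁ y₁ + homEval B k x₁ y₁ * homEval Q k x₁ y₁ : ℤ) : ℚ)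
        = n * (y₁ ^ (2 * k) * aeval ((x₁ : ℚ) / y₁) E) := by
    intro A B E n hA hB hABE
    have h1 := congrArg (aeval ((x₁ : ℚ) / y₁)) hABE
    rw [map_add, map_mul, map_mul, map_mul, aeval_C, algebraMap_int_eq, eq_intCast] at h1
    push_cast
    rw [homEval_cast hA _ _ hyQ, homEval_cast hB _ _ hyQ, homEval_cast hP _ _ hyQ,
      homEval_cast hQ _ _ hyQ]
    linear_combination (y₁ : ℚ) ^ (2 * k) * h1
  have e₁ : homEval U k x₁ y₁ * homEval P k x₁ y₁ + homEval V k x₁ y₁ * homEval Q k x₁ y₁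
      = r * y₁ ^ (2 * k) := by
    have := hhom hU hV e
    rw [map_one, mul_one] at this
    exact_mod_cast this
  have e₂ : homEval U' k x₁ y₁ * homEval P k x₁ y₁ + homEval V' k x₁ y₁ * homEval Q k x₁ y₁
      = r' * x₁ ^ (2 * k) := by
    have := hhom hU' hV' e'
    rw [map_pow, aeval_X, div_pow, mul_div_cancel₀ _ (pow_ne_zero _ hyQ)] at this
    exact_mod_cast this
  set a := homEval P k x₁ y₁
  set b := homEval Q k x₁ y₁
  obtain ⟨m, n, hmn⟩ := hxy₂
  -- `g` is, up to sign, the greatest common divisor of `a` and `b`.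
  set g := m * a + n * b with hg
  have ha : a = g * x₂ := by
    rw [hg]
    linear_combination n * hcross - a * hmn
  have hb : b = g * y₂ := by
    rw [hg]
    linear_combination -m * hcross - b * hmn
  have hgdvd : g ∣ r * r' := by
    obtain ⟨f, f', hff⟩ := (hxy₁.pow (m := 2 * k) (n := 2 * k))
    refine ⟨r * f * (homEval U' k x₁ y₁ * x₂ + homEval V' k x₁ y₁ * y₂)
      + r' * f' * (homEval U k x₁ y₁ * x₂ + homEval V k x₁ y₁ * y₂), ?_⟩
    rw [ha, hb] at e₁ e₂
    linear_combination -(r * r') * hff - r * f * e₂ - r' * f' * e₁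
  have hgle : |(g : ℝ)| ≤ |((r * r' : ℤ) : ℝ)| := by
    have := Int.le_of_dvd (abs_pos.2 (mul_ne_zero hr hr')) ((abs_dvd_abs _ _).2 hgdvd)
    exact_mod_cast this
  set H₁ := ratHeight x₁ y₁ with hH₁
  set H₂ := ratHeight x₂ y₂ with hH₂
  have h1 : 1 ≤ H₁ := one_le_ratHeight hy₁
  have hH₂0 : 0 ≤ H₂ := (abs_nonneg _).trans (abs_le_ratHeight_left x₂ y₂)
  set R := |((r * r' : ℤ) : ℝ)|
  have ha' : |(a : ℝ)| ≤ R * H₂ := by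
    rw [ha, Int.cast_mul, abs_mul]
    exact mul_le_mul hgle (abs_le_ratHeight_left x₂ y₂) (abs_nonneg _) hrr.le
  have hb' : |(b : ℝ)| ≤ R * H₂ := by
    rw [hb, Int.cast_mul, abs_mul]
    exact mul_le_mul hgle (abs_le_ratHeight_right x₂ y₂) (abs_nonneg _) hrr.le
  have hbound : ∀ {A B : ℤ} {D D' : ℝ} {s z : ℤ}, s ≠ 0 → 0 < D → 0 < D' →
      |(A : ℝ)| ≤ D * H₁ ^ k → |(B : ℝ)| ≤ D' * H₁ ^ k → A * a + B * b = s * z ^ (2 * k) →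
      |(z : ℝ)| ^ (2 * k) ≤ (D + D') * H₁ ^ k * (R * H₂) := by
    intro A B D D' s z hs hD hD' hA hB hAB
    have hs1 : (1 : ℝ) ≤ |(s : ℝ)| := by exact_mod_cast Int.one_le_abs hs
    have hAB' : (A : ℝ) * a + B * b = s * z ^ (2 * k) := by exact_mod_cast hAB
    calc |(z : ℝ)| ^ (2 * k) ≤ |(s : ℝ)| * |(z : ℝ)| ^ (2 * k) :=
          le_mul_of_one_le_left (by positivity) hs1
      _ = |(A : ℝ) * a + B * b| := by rw [hAB', abs_mul, abs_pow]
      _ ≤ |(A : ℝ)| * |(a : ℝ)| + |(B : ℝ)| * |(b : ℝ)| := by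
          rw [← abs_mul, ← abs_mul]
          exact abs_add_le _ _
      _ ≤ D * H₁ ^ k * (R * H₂) + D' * H₁ ^ k * (R * H₂) := by gcongr
      _ = _ := by ring
  have hpos : 0 < H₁ ^ k := by positivity
  have hmain : H₁ ^ (2 * k) ≤ (C₁ + C₂ + C₃ + C₄) * H₁ ^ k * (R * H₂) := by
    have hx := hbound hr' hC₃ hC₄ (hC₃' x₁ y₁) (hC₄' x₁ y₁) e₂
    have hy := hbound hr hC₁ hC₂ (hC₁' x₁ y₁) (hC₂' x₁ y₁) e₁
    have hX : (C₃ + C₄) * H₁ ^ k * (R * H₂) ≤ (C₁ + C₂ + C₃ + C₄) * H₁ ^ k * (R * H₂) := by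
      gcongr ?_ * _ * _
      linarith
    have hY : (C₁ + C₂) * H₁ ^ k * (R * H₂) ≤ (C₁ + C₂ + C₃ + C₄) * H₁ ^ k * (R * H₂) := by
      gcongr ?_ * _ * _
      linarith
    rcases max_choice |(x₁ : ℝ)| |(y₁ : ℝ)| with hc | hc
    · rw [hH₁, ratHeight, hc]
      rw [hH₁, ratHeight, hc] at hx hX
      exact hx.trans hX
    · rw [hH₁, ratHeight, hc]
      rw [hH₁, ratHeight, hc] at hy hY
      exact hy.trans hY
  rw [inv_mul_le_iff₀ (by positivity)]
  rw [two_mul, pow_add] at hmain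
  refine le_of_mul_le_mul_left (hmain.trans_eq ?_) hpos
  ring

/-- Since `P - β Q` has a simple zero at `α`, its values near `α` are bounded below by a multiple
of the distance to `α`. -/
lemma exists_norm_le_transfer {p : ℕ} [Fact p.Prime] {α β : ℚ_[p]} {P Q : ℤ[X]} {k : ℕ}
    (hP : P.natDegree ≤ k) (hQ : Q.natDegree ≤ k) (hrel : aeval α P = β * aeval α Q)
    (hder : aeval α (derivative P) - β * aeval α (derivative Q) ≠ 0) :
    ∃ c ε : ℝ, 0 < c ∧ 0 < ε ∧ ∀ x y : ℤ, 0 < y → IsCoprime x y →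
      ‖(y : ℚ_[p]) * α - x‖ < ε →
      ‖(y : ℚ_[p]) * α - x‖ ≤ c * ‖(homEval P k x y : ℚ_[p]) - β * homEval Q k x y‖ := by
  set W : ℚ_[p][X] := P.map (algebraMap ℤ ℚ_[p]) - C β * Q.map (algebraMap ℤ ℚ_[p]) with hW
  have hWeval : ∀ z, W.eval z = aeval z P - β * aeval z Q := by
    intro z
    simp [hW, aeval_def, eval₂_eq_eval_map]
  have hroot : W.IsRoot α := by rw [IsRoot, hWeval, hrel, sub_self]
  obtain ⟨S, hS⟩ := dvd_iff_isRoot.2 hroot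
  have hSα : S.eval α ≠ 0 := by
    have h1 : (derivative W).eval α = S.eval α := by
      rw [hS]
      simp
    have h2 : (derivative W).eval α = aeval α (derivative P) - β * aeval α (derivative Q) := by
      simp [hW, aeval_def, eval₂_eq_eval_map, derivative_map]
    rwa [← h1, h2]
  have hev : ∀ᶠ z in nhds α, ‖S.eval α‖ / 2 < ‖S.eval z‖ :=
    (S.continuous.norm.tendsto α).eventually (lt_mem_nhds (half_lt_self (norm_pos_iff.2 hSα)))
  obtain ⟨δ, hδ, hball⟩ := Metric.eventually_nhds_iff.1 hev
  set A := max 1 ‖α‖ with hA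
  have hA1 : 1 ≤ A := le_max_left _ _
  have hσ : 0 < ‖S.eval α‖ := norm_pos_iff.2 hSα
  refine ⟨2 * A ^ k / ‖S.eval α‖, min 1 (δ / A), by positivity, by positivity, ?_⟩
  intro x y hy hxy hlt
  have hyA := norm_denominator_ge hxy (hlt.trans_le (min_le_left _ _))
  have hy0 : (y : ℚ_[p]) ≠ 0 := by exact_mod_cast hy.ne'
  have hyn : 0 < ‖(y : ℚ_[p])‖ := norm_pos_iff.2 hy0
  have hquot : ‖(x : ℚ_[p]) / y - α‖ = ‖(y : ℚ_[p]) * α - x‖ / ‖(y : ℚ_[p])‖ := by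
    rw [← norm_div, ← norm_neg]
    congr 1
    field_simp
    ring
  have hδ' : ‖(x : ℚ_[p]) / y - α‖ < δ := by
    rw [hquot, div_lt_iff₀ hyn]
    calc _ < δ / A := hlt.trans_le (min_le_right _ _)
      _ = δ * A⁻¹ := div_eq_mul_inv _ _
      _ ≤ _ := by gcongr
  have hSz := hball (y := (x : ℚ_[p]) / y) (by rwa [dist_eq_norm])
  have hval : (homEval P k x y : ℚ_[p]) - β * homEval Q k x y
      = (y : ℚ_[p]) ^ k * (((x : ℚ_[p]) / y - α) * S.eval ((x : ℚ_[p]) / y)) := by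
    have h1 := hWeval ((x : ℚ_[p]) / y)
    rw [hS, eval_mul, eval_sub, eval_X, eval_C] at h1
    rw [h1, homEval_cast hP _ _ hy0, homEval_cast hQ _ _ hy0]
    ring
  have hge : ‖(y : ℚ_[p]) * α - x‖ ≤ ‖(x : ℚ_[p]) / y - α‖ := by
    rw [hquot, le_div_iff₀ hyn]
    exact mul_le_of_le_one_right (norm_nonneg _) (Padic.norm_int_le_one y)
  have hyk : (A ^ k)⁻¹ ≤ ‖(y : ℚ_[p])‖ ^ k := by
    rw [← inv_pow]
    gcongr
  rw [hval, norm_mul, norm_mul, norm_pow]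
  calc ‖(y : ℚ_[p]) * α - x‖
      = 2 * A ^ k / ‖S.eval α‖ *
          ((A ^ k)⁻¹ * (‖(y : ℚ_[p]) * α - x‖ * (‖S.eval α‖ / 2))) := by
        field_simp
    _ ≤ _ := by gcongr

/-! ### The gap principle -/

/-- **A generalized non-Archimedean gap principle.** Let `p` be a rational prime,
`α ∈ ℚ_p` a `p`-adic algebraic number of degree `d ≥ 3` over `ℚ` and `β ∈ ℚ(α)`
irrational. Let `μ` be a real number with `d/2 + 1 < μ < d` and let `C₀ > 0`. Then
there exist positive reals `C₃`, `C₄` (depending only on `α`, `β`, `μ`, `C₀`) such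
that: if `x₁/y₁`, `x₂/y₂` are rationals in lowest terms with
`H(x₂,y₂) ≥ H(x₁,y₁) ≥ C₃`, `|y₁α − x₁|_p < C₀/H(x₁,y₁)^μ` and
`|y₂β − x₂|_p < C₀/H(x₂,y₂)^μ`, then either `H(x₂,y₂) > C₄⁻¹·H(x₁,y₁)^(μ−d/2)`, or
there are integers `s, t, u, v` with `s·v − t·u ≠ 0` such that `β = (sα+t)/(uα+v)`
and `x₂/y₂ = (s·x₁+t·y₁)/(u·x₁+v·y₁)`. -/
theorem generalized_non_archimedean_gap_principle
    (p : ℕ) [Fact p.Prime] (d : ℕ) (hd : 3 ≤ d) (α : ℚ_[p]) (hα : IsAlgebraic ℚ α)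
    (hdeg : (minpoly ℚ α).natDegree = d)
    (β : ℚ_[p]) (hβmem : β ∈ Algebra.adjoin ℚ {α}) (hβirr : ∀ q : ℚ, (q : ℚ_[p]) ≠ β)
    (μ C₀ : ℝ) (hμ₁ : (d : ℝ) / 2 + 1 < μ) (hμ₂ : μ < d) (hC₀ : 0 < C₀) :
    ∃ C₃ C₄ : ℝ, 0 < C₃ ∧ 0 < C₄ ∧
      ∀ x₁ y₁ x₂ y₂ : ℤ, 0 < y₁ → 0 < y₂ → IsCoprime x₁ y₁ → IsCoprime x₂ y₂ →
        C₃ ≤ ratHeight x₁ y₁ → ratHeight x₁ y₁ ≤ ratHeight x₂ y₂ →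
        ‖(y₁ : ℚ_[p]) * α - (x₁ : ℚ_[p])‖ < C₀ / ratHeight x₁ y₁ ^ μ →
        ‖(y₂ : ℚ_[p]) * β - (x₂ : ℚ_[p])‖ < C₀ / ratHeight x₂ y₂ ^ μ →
        (C₄⁻¹ * ratHeight x₁ y₁ ^ (μ - (d : ℝ) / 2) < ratHeight x₂ y₂ ∨
          ∃ s t u v : ℤ, s * v - t * u ≠ 0 ∧
            β = ((s : ℚ_[p]) * α + (t : ℚ_[p])) / ((u : ℚ_[p]) * α + (v : ℚ_[p])) ∧
            (x₂ : ℚ) / (y₂ : ℚ) =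
              ((s * x₁ + t * y₁ : ℤ) : ℚ) / ((u * x₁ + v * y₁ : ℤ) : ℚ)) := by
  obtain ⟨k, P, Q, hk, hkd, hP, hQ, hPQ, hcop, hQα, hrel, hder⟩ :=
    exists_minimal_pair hα hβmem hβirr
  rw [hdeg] at hkd
  obtain ⟨cL, hcL, hLiou⟩ := liouville hα (by omega) hdeg
  obtain ⟨cT, ε, hcT, hε, htrans⟩ := exists_norm_le_transfer hP hQ hrel hder
  obtain ⟨cH, hcH, hheight⟩ := exists_le_ratHeight_of_cross_eq hcop hk hP hQ hPQ
  obtain ⟨CP, hCP, hCP'⟩ := exists_homEval_le P k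
  obtain ⟨CQ, hCQ, hCQ'⟩ := exists_homEval_le Q k
  obtain ⟨cP, hcP, hcP'⟩ := exists_norm_homEval_sub_le α hP
  obtain ⟨cQ, hcQ, hcQ'⟩ := exists_norm_homEval_sub_le α hQ
  have hd3 : (3 : ℝ) ≤ d := by exact_mod_cast hd
  set M := cP + ‖aeval α Q‖ + cQ with hM
  have hMpos : 0 < M := by positivity
  set B := (CP + CQ) * (M * C₀) with hB
  have hBpos : 0 < B := by positivity
  refine ⟨1 + cL * cT * C₀ / cH ^ μ + C₀ / ε, B + 1, by positivity, by positivity, ?_⟩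
  intro x₁ y₁ x₂ y₂ hy₁ hy₂ hxy₁ hxy₂ hC₃ hle happ₁ happ₂
  set H₁ := ratHeight x₁ y₁ with hH₁
  set H₂ := ratHeight x₂ y₂ with hH₂
  set δ₁ := ‖(y₁ : ℚ_[p]) * α - x₁‖ with hδ₁
  set δ₂ := ‖(y₂ : ℚ_[p]) * β - x₂‖ with hδ₂
  set a := homEval P k x₁ y₁ with ha
  set b := homEval Q k x₁ y₁ with hb
  have h1 : 1 ≤ H₁ := one_le_ratHeight hy₁
  have hH₁0 : 0 < H₁ := by linarith
  have hH₂0 : 0 < H₂ := by linarith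
  have hμ0 : 0 < μ := by linarith
  by_cases hN : a * y₂ - b * x₂ = 0
  · right
    have hcross : a * y₂ = b * x₂ := sub_eq_zero.1 hN
    have hk1 : k = 1 := by
      by_contra hne
      have hk2 : 2 ≤ k := by omega
      have hheight' : cH * H₁ ^ (2 : ℝ) ≤ H₂ := by
        refine le_trans ?_ (hheight x₁ y₁ x₂ y₂ hy₁ hxy₁ hxy₂ hcross)
        rw [Real.rpow_two]
        gcongr
      have hδε : δ₁ < ε := by
        refine happ₁.trans_le ?_
        have : C₀ / ε ≤ H₁ := by
          have : 0 < cL * cT * C₀ / cH ^ μ := by positivity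
          linarith
        rw [div_le_iff₀ (by positivity)]
        rw [div_le_iff₀ hε] at this
        calc C₀ ≤ H₁ * ε := this
          _ ≤ H₁ ^ μ * ε := by
            gcongr
            exact Real.self_le_rpow_of_one_le h1 (by linarith)
          _ = _ := mul_comm _ _
      -- `(a, b)` is the multiple of `(x₂, y₂)` by the integer `m * a + n * b`.
      have hab : ‖(a : ℚ_[p]) - β * b‖ ≤ δ₂ := by
        obtain ⟨m, n, hmn⟩ := hxy₂
        have hmn' : (m : ℚ_[p]) * x₂ + n * y₂ = 1 := by exact_mod_cast hmn
        have hcross' : (a : ℚ_[p]) * y₂ = b * x₂ := by exact_mod_cast hcross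
        have e : (a : ℚ_[p]) - β * b = ((-(m * a + n * b) : ℤ) : ℚ_[p]) * (y₂ * β - x₂) := by
          push_cast
          linear_combination (β * b - a) * hmn' + (β * m + n) * hcross'
        rw [e, norm_mul]
        exact mul_le_of_le_one_left (norm_nonneg _) (Padic.norm_int_le_one _)
      have hT := htrans x₁ y₁ hy₁ hxy₁ hδε
      have hL := hLiou x₁ y₁ hy₁
      have hpow : cH ^ μ * H₁ ^ (2 * μ) ≤ H₂ ^ μ := by
        calc _ = (cH * H₁ ^ (2 : ℝ)) ^ μ := by
              rw [Real.mul_rpow hcH.le (by positivity), ← Real.rpow_mul hH₁0.le]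
          _ ≤ _ := Real.rpow_le_rpow (by positivity) hheight' hμ0.le
      have hlt : 1 < cL * H₁ ^ d * (cT * (C₀ / (cH ^ μ * H₁ ^ (2 * μ)))) := by
        calc 1 ≤ cL * H₁ ^ d * δ₁ := hL
          _ ≤ cL * H₁ ^ d * (cT * δ₂) := by
              gcongr
              exact hT.trans (by gcongr)
          _ < cL * H₁ ^ d * (cT * (C₀ / H₂ ^ μ)) := by gcongr
          _ ≤ _ := by gcongr
      have hsplit : H₁ ^ (2 * μ) = H₁ ^ d * H₁ ^ (2 * μ - d) := by
        rw [← Real.rpow_natCast, ← Real.rpow_add hH₁0]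
        congr 1
        ring
      have hself : H₁ ≤ H₁ ^ (2 * μ - d) := Real.self_le_rpow_of_one_le h1 (by linarith)
      have heq : cL * H₁ ^ d * (cT * (C₀ / (cH ^ μ * H₁ ^ (2 * μ))))
          = cL * cT * C₀ / cH ^ μ / H₁ ^ (2 * μ - d) := by
        rw [hsplit]
        field_simp
      rw [heq, one_lt_div (by positivity)] at hlt
      have : 0 < C₀ / ε := by positivity
      linarith
    have hlin : ∀ F : ℤ[X], F.natDegree ≤ k →
        F = C (F.coeff 1) * X + C (F.coeff 0) := fun F hF =>
      eq_X_add_C_of_natDegree_le_one (hF.trans hk1.le)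
    have haev : ∀ F : ℤ[X], F.natDegree ≤ k →
        aeval α F = (F.coeff 1 : ℚ_[p]) * α + (F.coeff 0 : ℚ_[p]) := by
      intro F hF
      conv_lhs => rw [hlin F hF]
      simp
    have hhom : ∀ F : ℤ[X], homEval F k x₁ y₁ = F.coeff 1 * x₁ + F.coeff 0 * y₁ := by
      intro F
      rw [homEval, hk1]
      simp [Finset.sum_range_succ, add_comm]
    rw [haev P hP, haev Q hQ] at hrel
    rw [haev Q hQ] at hQα
    rw [hhom P] at ha
    rw [hhom Q] at hb
    generalize P.coeff 1 = s at *
    generalize P.coeff 0 = t at *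
    generalize Q.coeff 1 = u at *
    generalize Q.coeff 0 = v at *
    -- A vanishing determinant would make `P / Q` constant, hence `β` rational.
    have hdet : s * v - t * u ≠ 0 := by
      intro h0
      have h0' : (s : ℚ_[p]) * v - t * u = 0 := by exact_mod_cast h0
      have hus : (u : ℚ_[p]) * β - s = 0 := by
        refine (mul_eq_zero.1 ?_).resolve_right hQα
        linear_combination -(u : ℚ_[p]) * hrel - h0'
      have hu : u = 0 := by
        by_contra hu
        have hu' : (u : ℚ_[p]) ≠ 0 := by exact_mod_cast hu
        apply hβirr ((s : ℚ) / u)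
        push_cast
        rw [div_eq_iff hu']
        linear_combination -hus
      have hs : s = 0 := by
        rw [hu] at hus
        simpa using hus
      rw [hu] at hQα
      rw [hu, hs] at hrel
      apply hβirr ((t : ℚ) / v)
      push_cast
      rw [div_eq_iff (by simpa using hQα)]
      simpa using hrel
    refine ⟨s, t, u, v, hdet, ?_, ?_⟩
    · rw [hrel, mul_div_cancel_right₀ _ hQα]
    · rw [← ha, ← hb]
      have hb0 : b ≠ 0 := by
        intro hb0
        have ha0 : a = 0 := by
          rw [hb0, zero_mul] at hcross
          exact (mul_eq_zero.1 hcross).resolve_right hy₂.ne'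
        apply mul_ne_zero hdet hy₁.ne'
        linear_combination s * (hb.symm.trans hb0) - u * (ha.symm.trans ha0)
      have hb0' : (b : ℚ) ≠ 0 := by exact_mod_cast hb0
      have hy₂' : (y₂ : ℚ) ≠ 0 := by exact_mod_cast hy₂.ne'
      rw [div_eq_div_iff hy₂' hb0']
      have : (a : ℚ) * y₂ = b * x₂ := by exact_mod_cast hcross
      linear_combination -this
  · left
    have hprod := one_le_abs_mul_norm (p := p) hN
    have hsize : |((a * y₂ - b * x₂ : ℤ) : ℝ)| ≤ (CP + CQ) * H₁ ^ k * H₂ := by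
      push_cast
      calc |(a : ℝ) * y₂ - b * x₂| ≤ |(a : ℝ)| * |(y₂ : ℝ)| + |(b : ℝ)| * |(x₂ : ℝ)| := by
            rw [← abs_mul, ← abs_mul]
            exact abs_sub _ _
        _ ≤ (CP * H₁ ^ k) * H₂ + (CQ * H₁ ^ k) * H₂ := by
            gcongr
            · exact hCP' x₁ y₁
            · exact abs_le_ratHeight_right x₂ y₂
            · exact hCQ' x₁ y₁
            · exact abs_le_ratHeight_left x₂ y₂
        _ = _ := by ring
    have hδ₂' : δ₂ ≤ C₀ / H₁ ^ μ := by
      refine happ₂.le.trans ?_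
      gcongr
    have hnorm : ‖((a * y₂ - b * x₂ : ℤ) : ℚ_[p])‖ ≤ M * (C₀ / H₁ ^ μ) := by
      have e : ((a * y₂ - b * x₂ : ℤ) : ℚ_[p])
          = y₂ * (a - y₁ ^ k * aeval α P)
            + ((y₁ ^ k : ℤ) : ℚ_[p]) * (aeval α Q * (y₂ * β - x₂))
            + ((-x₂ : ℤ) : ℚ_[p]) * (b - y₁ ^ k * aeval α Q) := by
        push_cast
        rw [hrel]
        ring
      have hint : ∀ (n : ℤ) (z : ℚ_[p]), ‖(n : ℚ_[p]) * z‖ ≤ ‖z‖ := by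
        intro n z
        rw [norm_mul]
        exact mul_le_of_le_one_left (norm_nonneg _) (Padic.norm_int_le_one n)
      rw [e]
      calc _ ≤ ‖(a : ℚ_[p]) - y₁ ^ k * aeval α P‖ + ‖aeval α Q * (y₂ * β - x₂)‖
            + ‖(b : ℚ_[p]) - y₁ ^ k * aeval α Q‖ :=
            norm_add₃_le.trans (add_le_add_three (hint _ _) (hint _ _) (hint _ _))
        _ ≤ cP * (C₀ / H₁ ^ μ) + ‖aeval α Q‖ * (C₀ / H₁ ^ μ) + cQ * (C₀ / H₁ ^ μ) := by
            rw [norm_mul]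
            gcongr
            · exact (hcP' x₁ y₁).trans (by gcongr)
            · exact (hcQ' x₁ y₁).trans (by gcongr)
        _ = _ := by rw [hM]; ring
    have hHk : H₁ ^ k ≤ H₁ ^ ((d : ℝ) / 2) := by
      rw [← Real.rpow_natCast]
      refine Real.rpow_le_rpow_of_exponent_le h1 ?_
      have : (2 : ℝ) * k ≤ d := by exact_mod_cast hkd
      linarith
    have hone : 1 ≤ B * H₂ / H₁ ^ (μ - (d : ℝ) / 2) := by
      calc 1 ≤ _ := hprod
        _ ≤ ((CP + CQ) * H₁ ^ k * H₂) * (M * (C₀ / H₁ ^ μ)) :=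
            mul_le_mul hsize hnorm (norm_nonneg _) (by positivity)
        _ ≤ ((CP + CQ) * H₁ ^ ((d : ℝ) / 2) * H₂) * (M * (C₀ / H₁ ^ μ)) := by gcongr
        _ = _ := by
            rw [Real.rpow_sub hH₁0, hB]
            field_simp
    rw [one_le_div (by positivity)] at hone
    rw [inv_mul_lt_iff₀ (by positivity)]
    linarith
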